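/- Let (W, S) be a finite Coxeter system over a finite index set B with |B| = n ≥ 3. Then there exists an enumeration b₁, …, b_n of B such that M bᵢ b_n = 2 for all 1 ≤ i ≤ n − 2; equivalently, the simple reflection s_{b_n} commutes with s_{bᵢ} for every i ≤ n − 2 (the Coxeter diagram of a finite Coxeter system has a vertex adjacent to at most one other vertex). -/

import Mathlib

/-!
Let `W` act on `⨁ ℝ eᵢ` by its geometric representation, in which `sᵢ` is the reflection
`v ↦ v - fᵢ(v) eᵢ` with `fᵢ(eⱼ) = -2 cos (π / mᵢⱼ)`. Since `W` is finite, averaging gives an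
invariant inner product `β`, for which `2 β(eᵢ, v) = fᵢ(v) β(eᵢ, eᵢ)`. Apply this to `v = ∑ⱼ eⱼ`:
from `0 < β(v, v) = ∑ᵢ β(eᵢ, v)`, some `fᵢ(v)` is positive, that is, the `i`-th row of the matrix
`(fᵢ(eⱼ))` has positive sum. Its diagonal entry is `2`, all others are nonpositive, and each
neighbour `j` of `i` in the Coxeter diagram contributes at most `-2 cos (π / 3) = -1`; so `i` has at
most one neighbour.
-/

open Module Real

section Reflections

open Polynomial.Chebyshev

theorem S_eval_two_mul_cos_eq_zero {θ : ℝ} (hθ : sin θ ≠ 0) {k : ℤ}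
    (hk : sin ((k + 1) * θ) = 0) : (S ℝ k).eval (2 * cos θ) = 0 :=
  (mul_eq_zero.mp ((S_two_mul_real_cos θ k).trans hk)).resolve_right hθ

theorem S_eval_add_S_eval_two_mul_cos_eq_zero {θ : ℝ} (hθ : sin θ ≠ 0) {k : ℤ}
    (hk : sin ((k + 1 / 2) * θ) = 0) :
    (S ℝ k).eval (2 * cos θ) + (S ℝ (k - 1)).eval (2 * cos θ) = 0 := by
  have hmul : ((S ℝ k).eval (2 * cos θ) + (S ℝ (k - 1)).eval (2 * cos θ)) * sin θ = 0 := calc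
    _ = sin ((k + 1 / 2) * θ + θ / 2) + sin ((k + 1 / 2) * θ - θ / 2) := by
      rw [add_mul, S_two_mul_real_cos, S_two_mul_real_cos]
      push_cast
      ring_nf
    _ = 0 := by rw [sin_add, sin_sub, hk]; ring
  exact (mul_eq_zero.mp hmul).resolve_right hθ

section CommRing

variable {R V : Type*} [CommRing R] [AddCommGroup V] [Module R V] {x y : V} {f g : Dual R V}

theorem reflection_sq_eq_one (hf : f x = 2) : reflection hf ^ 2 = 1 := by
  ext z
  simpa [sq] using involutive_reflection hf z

theorem reflection_mul_reflection_sq_eq_one (hf : f x = 2) (hg : g y = 2) (hfy : f y = 0)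
    (hgx : g x = 0) : (reflection hf * reflection hg) ^ 2 = 1 := by
  have hcomm : Commute (reflection hf) (reflection hg) := by
    ext z
    simp only [LinearEquiv.mul_apply, reflection_apply, map_sub, map_smul, hfy, hgx]
    module
  rw [hcomm.mul_pow, reflection_sq_eq_one, reflection_sq_eq_one, one_mul]

theorem two_mul_apply_eq_of_isOrthogonal_reflection {β : LinearMap.BilinForm R V} {hf : f x = 2}
    (hβ : β.IsOrthogonal (reflection hf)) (v : V) : 2 * β x v = f v * β x x := by
  have h : f v * β x x - β x v = β x v := by simpa [reflection_apply] using hβ x v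
  linear_combination -h

end CommRing

/-- The angle `φ` between the mirrors must not be a multiple of `π / 2`: otherwise the product of
the reflections, a rotation by `2 * φ` on the span of `x` and `y`, need not be semisimple. -/
theorem reflection_mul_reflection_pow_eq_one {V : Type*} [AddCommGroup V] [Module ℝ V] {x y : V}
    {f g : Dual ℝ V} (hf : f x = 2) (hg : g y = 2) {φ : ℝ} (hφ : sin (2 * φ) ≠ 0)
    (hfg : f y * g x = 4 * cos φ ^ 2) {m : ℕ} (hm : sin (m * φ) = 0) :
    (reflection hf * reflection hg) ^ m = 1 := by
  have ht : 2 * cos (2 * φ) = f y * g x - 2 := by rw [hfg, cos_two_mul]; ring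
  ext z
  rw [reflection_mul_reflection_pow_apply hf hg m z _ ht]
  obtain ⟨k, rfl | rfl⟩ := Nat.even_or_odd' m
  · have hS : (S ℝ ((k : ℤ) - 1)).eval (2 * cos (2 * φ)) = 0 :=
      S_eval_two_mul_cos_eq_zero hφ (by rw [← hm]; push_cast; ring_nf)
    rw [show (((2 * k : ℕ) : ℤ) - 2) / 2 = k - 1 by omega,
      show (((2 * k : ℕ) : ℤ) - 1) / 2 = k - 1 by omega, hS]
    simp
  · have hS : (S ℝ (k : ℤ)).eval (2 * cos (2 * φ)) +
        (S ℝ ((k : ℤ) - 1)).eval (2 * cos (2 * φ)) = 0 :=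
      S_eval_add_S_eval_two_mul_cos_eq_zero hφ (by rw [← hm]; push_cast; ring_nf)
    rw [show (((2 * k + 1 : ℕ) : ℤ) - 2) / 2 = k - 1 by omega,
      show (((2 * k + 1 : ℕ) : ℤ) - 1) / 2 = k by omega,
      show (((2 * k + 1 : ℕ) : ℤ) - 3) / 2 = k - 1 by omega,
      show ((2 * k + 1 : ℕ) : ℤ) / 2 = k by omega, hS]
    simp

end Reflections

section InvariantForm

open LinearMap (BilinForm)

variable {K V : Type*} [CommRing K] [LinearOrder K] [IsStrictOrderedRing K] [AddCommGroup V]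
  [Module K V]

theorem exists_bilinForm_posDef [Module.Free K V] :
    ∃ β : BilinForm K V, β.toQuadraticMap.PosDef := by
  let b := Module.Free.chooseBasis K V
  let dot : BilinForm K (Module.Free.ChooseBasisIndex K V →₀ K) :=
    Finsupp.bilinearCombination K K ∘ₗ Finsupp.lcoeFun
  refine ⟨dot.compl₁₂ b.repr.toLinearMap b.repr.toLinearMap, fun v hv ↦ ?_⟩
  have hdot : dot (b.repr v) (b.repr v) = ∑ i ∈ (b.repr v).support, b.repr v i * b.repr v i := rfl
  have hsupp : (b.repr v).support.Nonempty := by simpa using hv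
  rw [LinearMap.BilinMap.toQuadraticMap_apply, LinearMap.compl₁₂_apply]
  exact hdot ▸ Finset.sum_pos
    (fun i hi ↦ mul_self_pos.mpr (Finsupp.mem_support_iff.mp hi)) hsupp

theorem exists_invariant_bilinForm_posDef [Module.Free K V] {G : Type*} [Group G] [Finite G]
    (ρ : Representation K G V) :
    ∃ β : BilinForm K V, β.toQuadraticMap.PosDef ∧ ∀ g, β.IsOrthogonal (ρ g) := by
  have := Fintype.ofFinite G
  obtain ⟨φ, hφ⟩ := exists_bilinForm_posDef (K := K) (V := V)
  let β : BilinForm K V := ∑ g, φ.compl₁₂ (ρ g) (ρ g)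
  have hβ (u v : V) : β u v = ∑ g, φ (ρ g u) (ρ g v) := by simp [β]
  refine ⟨β, fun v hv ↦ ?_, fun h u v ↦ ?_⟩
  · rw [LinearMap.BilinMap.toQuadraticMap_apply, hβ]
    exact Finset.sum_pos
      (fun g _ ↦ hφ _ ((map_ne_zero_iff _ (ρ.apply_bijective g).injective).mpr hv))
      Finset.univ_nonempty
  · rw [hβ, hβ]
    exact Fintype.sum_equiv (Equiv.mulRight h) _ _ fun g ↦ by simp

theorem exists_coroot_sum_pos {ι : Type*} [Fintype ι] {β : BilinForm K V}
    (hβ : β.toQuadraticMap.PosDef) {x : ι → V} {f : ι → Dual K V} {hf : ∀ i, f i (x i) = 2}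
    (hinv : ∀ i, β.IsOrthogonal (reflection (hf i))) (hx : ∑ j, x j ≠ 0) :
    ∃ i, 0 < f i (∑ j, x j) := by
  have hsum : 0 < ∑ i, β (x i) (∑ j, x j) := by
    rw [← LinearMap.sum_apply, ← map_sum]
    exact hβ _ hx
  obtain ⟨i, hi⟩ : ∃ i, 0 < β (x i) (∑ j, x j) := by
    by_contra! h
    exact hsum.not_ge (Finset.sum_nonpos fun i _ ↦ h i)
  refine ⟨i, pos_of_mul_pos_left ?_ (hβ.nonneg (x i))⟩
  rw [LinearMap.BilinMap.toQuadraticMap_apply,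
    ← two_mul_apply_eq_of_isOrthogonal_reflection (hinv i)]
  exact mul_pos two_pos hi

end InvariantForm

section GeometricRepresentation

variable {B W : Type*} [Group W] {M : CoxeterMatrix B}

/-- The Cartan matrix of a Coxeter matrix: twice the Gram matrix of its simple roots. The diagonal
entries are `-2 cos π = 2`; an entry `M i j = 0`, which encodes the order `∞`, gives `-2 cos 0 = -2`
since `π / 0 = 0`. -/
noncomputable def coxeterCartanMatrix (M : CoxeterMatrix B) : Matrix B B ℝ :=
  .of fun i j ↦ -(2 * cos (π / M i j))

theorem coxeterCartanMatrix_apply (i j : B) :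
    coxeterCartanMatrix M i j = -(2 * cos (π / M i j)) := rfl

theorem coxeterCartanMatrix_apply_self (i : B) : coxeterCartanMatrix M i i = 2 := by
  simp [coxeterCartanMatrix_apply]

theorem coxeterCartanMatrix_comm (i j : B) :
    coxeterCartanMatrix M i j = coxeterCartanMatrix M j i := by
  rw [coxeterCartanMatrix_apply, coxeterCartanMatrix_apply, M.symmetric]

theorem coxeterCartanMatrix_eq_zero {i j : B} (h : M i j = 2) : coxeterCartanMatrix M i j = 0 := by
  simp [coxeterCartanMatrix_apply, h]

theorem coxeterCartanMatrix_le_neg_one {i j : B} (hij : i ≠ j) (h : M i j ≠ 2) :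
    coxeterCartanMatrix M i j ≤ -1 := by
  have hangle : π / M i j ≤ π / 3 := by
    have hne := M.off_diagonal i j hij
    obtain h0 | h3 : M i j = 0 ∨ 3 ≤ M i j := by omega
    · simpa [h0] using by positivity
    · have : (3 : ℝ) ≤ M i j := mod_cast h3
      gcongr
  have hcos : cos (π / 3) ≤ cos (π / M i j) :=
    cos_le_cos_of_nonneg_of_le_pi (by positivity) (by linarith [pi_pos]) hangle
  rw [cos_pi_div_three] at hcos
  rw [coxeterCartanMatrix_apply]
  linarith

theorem coxeterCartanMatrix_nonpos {i j : B} (hij : i ≠ j) : coxeterCartanMatrix M i j ≤ 0 := by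
  by_cases h : M i j = 2
  · exact (coxeterCartanMatrix_eq_zero h).le
  · linarith [coxeterCartanMatrix_le_neg_one hij h]

variable (M) in
/-- The simple coroot `fᵢ` of the geometric representation, whose simple roots are the standard
basis vectors `Finsupp.single i 1`. -/
noncomputable def simpleCoroot (i : B) : Dual ℝ (B →₀ ℝ) :=
  Finsupp.linearCombination ℝ (coxeterCartanMatrix M i)

theorem simpleCoroot_single (i j : B) :
    simpleCoroot M i (.single j 1) = coxeterCartanMatrix M i j := by
  simp [simpleCoroot]

theorem simpleCoroot_single_self (i : B) : simpleCoroot M i (.single i 1) = 2 := by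
  rw [simpleCoroot_single, coxeterCartanMatrix_apply_self]

variable (M) in
/-- The reflection `v ↦ v - fᵢ(v) eᵢ` by which the `i`-th generator acts in the geometric
representation. -/
noncomputable def simpleReflection (i : B) : (B →₀ ℝ) ≃ₗ[ℝ] (B →₀ ℝ) :=
  reflection (simpleCoroot_single_self (M := M) i)

theorem simpleReflection_mul_simpleReflection_pow (i j : B) :
    (simpleReflection M i * simpleReflection M j) ^ M i j = 1 := by
  obtain rfl | hij := eq_or_ne i j
  · rw [M.diagonal, pow_one, ← sq, simpleReflection, reflection_sq_eq_one]
  have hne := M.off_diagonal i j hij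
  obtain h0 | h2 | h3 : M i j = 0 ∨ M i j = 2 ∨ 3 ≤ M i j := by omega
  · rw [h0, pow_zero]
  · rw [h2]
    have hA : coxeterCartanMatrix M i j = 0 := coxeterCartanMatrix_eq_zero h2
    apply reflection_mul_reflection_sq_eq_one
    · rw [simpleCoroot_single, hA]
    · rw [simpleCoroot_single, coxeterCartanMatrix_comm, hA]
  · have hm : (3 : ℝ) ≤ M i j := mod_cast h3
    refine reflection_mul_reflection_pow_eq_one (φ := π / M i j) _ _ (ne_of_gt ?_) ?_ ?_
    · apply sin_pos_of_pos_of_lt_pi (by positivity)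
      rw [← mul_div_assoc, div_lt_iff₀ (by positivity)]
      nlinarith [pi_pos]
    · rw [simpleCoroot_single, simpleCoroot_single, coxeterCartanMatrix_comm j i,
        coxeterCartanMatrix_apply]
      ring
    · rw [mul_div_cancel₀ _ (by positivity), sin_pi]

/-- The geometric representation of a Coxeter group, on the real vector space with basis indexed by
the simple reflections. -/
noncomputable def geometricRepresentation (cs : CoxeterSystem M W) :
    Representation ℝ W (B →₀ ℝ) :=
  (LinearEquiv.automorphismGroup.toLinearMapMonoidHom (R := ℝ) (M := B →₀ ℝ)).comp
    (cs.lift ⟨simpleReflection M, simpleReflection_mul_simpleReflection_pow⟩)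

theorem geometricRepresentation_simple (cs : CoxeterSystem M W) (i : B) :
    geometricRepresentation cs (cs.simple i) = simpleReflection M i := by
  rw [geometricRepresentation, MonoidHom.comp_apply,
    cs.lift_apply_simple simpleReflection_mul_simpleReflection_pow]
  rfl

theorem exists_coxeterCartanMatrix_row_sum_pos [Fintype B] [Nonempty B] [Finite W]
    (cs : CoxeterSystem M W) : ∃ i, 0 < ∑ j, coxeterCartanMatrix M i j := by
  obtain ⟨β, hβ, hinv⟩ := exists_invariant_bilinForm_posDef (geometricRepresentation cs)
  have hne : ∑ j : B, Finsupp.single j (1 : ℝ) ≠ 0 := by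
    obtain ⟨i⟩ := ‹Nonempty B›
    classical
    exact fun h ↦ by simpa [Finsupp.single_apply] using DFunLike.congr_fun h i
  have hrefl (i : B) : β.IsOrthogonal (simpleReflection M i) := by
    simpa only [geometricRepresentation_simple, LinearEquiv.coe_coe] using hinv (cs.simple i)
  simpa only [map_sum, simpleCoroot_single] using exists_coroot_sum_pos hβ hrefl hne

end GeometricRepresentation

section CoxeterDiagram

variable {B W : Type*} [Group W]

/-- The Coxeter diagram of a Coxeter matrix, without its edge labels. -/
def coxeterDiagram (M : CoxeterMatrix B) : SimpleGraph B where
  Adj i j := i ≠ j ∧ M i j ≠ 2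
  symm := ⟨fun _ _ h ↦ ⟨h.1.symm, M.symmetric .. ▸ h.2⟩⟩
  loopless := ⟨fun _ h ↦ h.1 rfl⟩

variable {M : CoxeterMatrix B}

theorem coxeterDiagram_neighborSet_subsingleton [Fintype B] {i : B}
    (hi : 0 < ∑ j, coxeterCartanMatrix M i j) :
    ((coxeterDiagram M).neighborSet i).Subsingleton := by
  classical
  rintro j ⟨hij, hj⟩ k ⟨hik, hk⟩
  by_contra hjk
  have hsum : ∑ l, coxeterCartanMatrix M i l ≤ ∑ l ∈ {i, j, k}, coxeterCartanMatrix M i l :=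
    Finset.sum_le_sum_of_subset_of_nonpos' (Finset.subset_univ _) fun l _ hl ↦
      coxeterCartanMatrix_nonpos (by rintro rfl; simp at hl)
  rw [Finset.sum_insert (by simp [hij, hik]), Finset.sum_pair hjk,
    coxeterCartanMatrix_apply_self] at hsum
  linarith [coxeterCartanMatrix_le_neg_one hij hj, coxeterCartanMatrix_le_neg_one hik hk]

theorem exists_coxeterDiagram_neighborSet_subsingleton [Finite B] [Nonempty B] [Finite W]
    (cs : CoxeterSystem M W) : ∃ i, ((coxeterDiagram M).neighborSet i).Subsingleton := by
  have := Fintype.ofFinite B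
  exact (exists_coxeterCartanMatrix_row_sum_pos cs).imp fun _ ↦
    coxeterDiagram_neighborSet_subsingleton

theorem commute_simple_of_eq_two (cs : CoxeterSystem M W) {i j : B} (h : M i j = 2) :
    Commute (cs.simple i) (cs.simple j) := by
  have hsq : cs.simple i * cs.simple j * (cs.simple i * cs.simple j) = 1 := by
    rw [← sq, ← h, cs.simple_mul_simple_pow]
  simpa [commute_iff_eq] using eq_inv_of_mul_eq_one_left hsq

end CoxeterDiagram

theorem exists_ne_forall_mem_eq_of_subsingleton {α : Type*} [Nontrivial α] {s : Set α}
    (hs : s.Subsingleton) {a : α} (ha : a ∉ s) : ∃ b ≠ a, ∀ x ∈ s, x = b := by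
  obtain rfl | ⟨b, rfl⟩ := hs.eq_empty_or_singleton
  · simpa using exists_ne a
  · exact ⟨b, fun h ↦ ha h.symm, fun _ ↦ id⟩

theorem exists_equiv_apply_eq_apply_eq {α β : Type*} (e : α ≃ β) {a a' : α} (ha : a ≠ a')
    {b b' : β} (hb : b ≠ b') : ∃ e' : α ≃ β, e' a = b ∧ e' a' = b' := by
  obtain ⟨σ, hσ⟩ := Equiv.Perm.exists_extending_pair ![e a, e a'] ![b, b']
    (by simpa [Function.Injective, Fin.forall_fin_two, eq_comm] using ha)
    (by simpa [Function.Injective, Fin.forall_fin_two, eq_comm] using hb)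
  exact ⟨e.trans σ, hσ 0, hσ 1⟩

/-- In a finite Coxeter system over a finite index set `B` with `|B| = n ≥ 3`, there is
an enumeration `b₁, …, b_n` of `B` such that `M bᵢ b_n = 2` for all `1 ≤ i ≤ n - 2`;
equivalently, the simple reflection `s_{b_n}` commutes with `s_{bᵢ}` for all such `i`. -/
theorem finite_coxeter_exists_enumeration_commuting_last
    {B W : Type*} [Fintype B] [Group W] [Finite W]
    (M : CoxeterMatrix B) (cs : CoxeterSystem M W)
    (n : ℕ) (hn : 3 ≤ n) (hcard : Fintype.card B = n) :
    ∃ e : Fin n ≃ B, ∀ i : Fin n, (i : ℕ) + 2 < n →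
      M (e i) (e ⟨n - 1, by omega⟩) = 2 ∧
      Commute (cs.simple (e i)) (cs.simple (e ⟨n - 1, by omega⟩)) := by
  have : Nontrivial B := Fintype.one_lt_card_iff_nontrivial.mp (by omega)
  obtain ⟨b, hb⟩ := exists_coxeterDiagram_neighborSet_subsingleton cs
  obtain ⟨c, hcb, hc⟩ :=
    exists_ne_forall_mem_eq_of_subsingleton hb ((coxeterDiagram M).notMem_neighborSet_self)
  obtain ⟨e, hlast, hpen⟩ := exists_equiv_apply_eq_apply_eq
    (Fintype.equivFinOfCardEq hcard).symm
    (a := ⟨n - 1, by omega⟩) (a' := ⟨n - 2, by omega⟩) (by rw [Fin.ne_iff_vne]; dsimp only; omega)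
    hcb.symm
  refine ⟨e, fun i hi ↦ ?_⟩
  have hib : e i ≠ b := by rw [← hlast, e.injective.ne_iff, Fin.ne_iff_vne]; dsimp only; omega
  have hic : e i ≠ c := by rw [← hpen, e.injective.ne_iff, Fin.ne_iff_vne]; dsimp only; omega
  have hM : M (e i) (e ⟨n - 1, by omega⟩) = 2 := by
    rw [hlast, M.symmetric]
    exact not_not.mp fun h ↦ hic (hc (e i) (And.intro hib.symm h))
  exact ⟨hM, commute_simple_of_eq_two cs hM⟩
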